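/- Assume m ≥ n+1, that f_1,…,f_m satisfy the SNC hypothesis, and that d_i ≥ 2 for all i. Let Der(A) = {θ ∈ R^n : f_i divides Σ_{j=1}^n θ_j·∂f_i/∂x_j in R, for all i = 1,…,m} be the module of derivations tangent to the arrangement. Then Der(A) is generated as an R-module by the Euler vector (x_1,…,x_n) together with the vectors π(c_T), where T ranges over all (m+1)-element subsets of the columns of Q_{∖1}, c_T is the corresponding circuit vector, and π : R^{m+n−1} → R^n is the projection onto the last n coordinates. -/

import Mathlib

open MvPolynomial

noncomputable section

/-- The polynomial ring `R = ℂ[x_1,…,x_n]`. -/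
abbrev Rp (n : ℕ) := MvPolynomial (Fin n) ℂ

/-- The polynomial ring `S = ℂ[s_1,…,s_m,x_1,…,x_n]`; `Sum.inl i ↦ s_i`, `Sum.inr j ↦ x_j`. -/
abbrev Sp (n m : ℕ) := MvPolynomial (Fin m ⊕ Fin n) ℂ

/-- The inclusion `R ⊆ S`. -/
def toS (n m : ℕ) : Rp n →ₐ[ℂ] Sp n m := rename Sum.inr

/-- Column index set for `Q_{∖1}`: diagonal columns `2,…,m` and the `n` Jacobian columns. -/
abbrev Col (n m : ℕ) := {k : Fin m // (k : ℕ) ≠ 0} ⊕ Fin n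

/-- The SNC (strict normal crossing) hypothesis, via the Jacobian criterion. -/
def SNC (n m : ℕ) (f : Fin m → Rp n) : Prop :=
  (∀ i, Irreducible (f i)) ∧
  ∀ I : Finset (Fin m), 1 ≤ I.card → I.card ≤ n →
    ∀ p : Fin n → ℂ, p ≠ 0 → (∀ i ∈ I, eval p (f i) = 0) →
      (Matrix.of fun (i : I) (j : Fin n) => eval p (pderiv j (f i.1))).rank = I.card

/-- The matrix `Q = (diag(f_1,…,f_m) | J_f)`. -/
def Qmat (n m : ℕ) (f : Fin m → Rp n) : Matrix (Fin m) (Fin m ⊕ Fin n) (Rp n) :=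
  Matrix.of fun i => Sum.elim (fun k => if i = k then f i else 0) (fun j => pderiv j (f i))

/-- The matrix `Q_{∖1}`, obtained from `Q` by deleting the first column. -/
def Q1 (n m : ℕ) (f : Fin m → Rp n) : Matrix (Fin m) (Col n m) (Rp n) :=
  Matrix.of fun i => Sum.elim (fun k => if i = (k : Fin m) then f i else 0)
    (fun j => pderiv j (f i))

/-- The matrix `Q^s_{∖1}`: `Q_{∖1}` (over `S`) with the row `(s_2,…,s_m,0,…,0)` appended. -/
def Qs1 (n m : ℕ) (f : Fin m → Rp n) : Matrix (Option (Fin m)) (Col n m) (Sp n m) :=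
  Matrix.of fun i? c =>
    i?.elim (Sum.elim (fun k : {k : Fin m // (k : ℕ) ≠ 0} => (X (Sum.inl (k : Fin m)) : Sp n m)) (fun _ : Fin n => (0 : Sp n m)) c)
      (fun i => toS n m (Q1 n m f i c))

/-- The ideal generated by all `k × k` minors of a matrix. -/
def minorsIdeal {A : Type*} [CommRing A] {ι κ : Type*} (k : ℕ) (M : Matrix ι κ A) : Ideal A :=
  Ideal.span {x | ∃ r : Fin k → ι, ∃ c : Fin k → κ,
    Function.Injective r ∧ Function.Injective c ∧ x = (M.submatrix r c).det}

/-- `h_j = Σ_i s_i·(Π_{k≠i} f_k)·∂f_i/∂x_j`. -/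
def hpoly (n m : ℕ) (f : Fin m → Rp n) (j : Fin n) : Sp n m :=
  ∑ i, X (Sum.inl i) * toS n m (((Finset.univ.erase i).prod f) * pderiv j (f i))

/-- The linear form `Σ_i d_i·s_i`. -/
def linForm (n m : ℕ) (d : Fin m → ℕ) : Sp n m := ∑ i, (d i : Sp n m) * X (Sum.inl i)

/-- The likelihood ideal `I_A`: contraction to `S` of the ideal `⟨h_1,…,h_n⟩` of `S_f`. -/
def IA (n m : ℕ) (f : Fin m → Rp n) : Ideal (Sp n m) :=
  (Ideal.span (Set.range fun j =>
      algebraMap (Sp n m) (Localization.Away (toS n m (∏ i, f i))) (hpoly n m f j))).comap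
    (algebraMap (Sp n m) (Localization.Away (toS n m (∏ i, f i))))

/-- Linear order on the columns of `Q_{∖1}`: diagonal columns first, then Jacobian columns. -/
def colIdx (n m : ℕ) : Col n m → ℕ :=
  Sum.elim (fun k => ((k : Fin m) : ℕ)) (fun j => m + (j : ℕ))

instance (n m : ℕ) : LinearOrder (Col n m) :=
  LinearOrder.lift' (colIdx n m) (by
    rintro (⟨k, hk⟩ | j) (⟨k', hk'⟩ | j') h <;>
      simp only [colIdx, Sum.elim_inl, Sum.elim_inr] at h
    · exact congrArg Sum.inl (Subtype.ext (Fin.val_injective h))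
    · exact absurd h (by have := k.isLt; omega)
    · exact absurd h (by have := k'.isLt; omega)
    · exact congrArg Sum.inr (Fin.val_injective (by omega)))

/-- The circuit vector `c_T` attached to an `(m+1)`-element subset `T` of the columns of
`Q_{∖1}`: its entry at the `k`-th smallest element `t_k` of `T` is
`(−1)^k · det(Q_{∖1}[T ∖ {t_k}])` (the columns of `T ∖ {t_k}` taken in increasing order,
via `k.succAbove`), and it vanishes outside `T`. -/
def circuit (n m : ℕ) (f : Fin m → Rp n) (T : Finset (Col n m)) (hT : T.card = m + 1) :
    Col n m → Rp n := fun c =>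
  ∑ k : Fin (m + 1),
    if c = T.orderEmbOfFin hT k then
      (-1 : Rp n) ^ (k : ℕ) *
        ((Q1 n m f).submatrix id fun l : Fin m => T.orderEmbOfFin hT (k.succAbove l)).det
    else 0

/-!
A derivation `θ` with `θ(f_i) = a_i f_i` for all `i` becomes, after subtracting a multiple of the
Euler derivation, one with `a_1 = 0`; such derivations are the Jacobian parts of the vectors in the
kernel of `Q_{∖1}`. So the circuits have to generate that kernel.

By Cramer's rule any maximal minor multiplies the kernel into the span of the circuits. At a point
`p ≠ 0`, Euler's identity at `p` and normal crossings make the rows of `Q_{∖1}(p)` independent, so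
by the Nullstellensatz the ideal of maximal minors contains a power of `(x_1, …, x_n)`, and the
cokernel (kernel / circuits) is killed by such a power. It remains to see that `R^κ / circuits` has
positive depth, where `κ` is the set of the columns.

With `G = R^κ` and the rows `r_1, …, r_m` regarded as linear forms on `G`, the circuits span the
image of `r_m ⌟ ⋯ ⌟ r_1 ⌟ : ⋀^{m+1} G → G`. Put `C_p(S) = ⋀^p G / ∑_{i ∈ S} r_i ⌟ ⋀^{p+1} G`. For
`a ∉ S` there is an exact sequence `C_{p+1}(S ∪ {a}) → C_p(S) → C_p(S ∪ {a}) → 0`, and the kernel of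
the first map is killed by the maximal minors, because multiplication by a vector on which `r_a` is
a minor and the other `r_i` vanish is a homotopy. As `C_p(S) = 0` for `p > |κ|`, downward induction
on `p` shows that these sequences are exact on the left as well and that the depth of `C_p(S)` is at
least `p - m + 1` as soon as `R` has depth at least `|κ| - m + 1`. The same argument gives the exact
sequence `0 → C_{m+1}({1, …, m}) → G → G / circuits → 0`, in which the first term has depth at least
two and the second has positive depth.
-/

universe u

section Depth

open CategoryTheory Abelian Module

variable {R : Type u} [CommRing R] {I : Ideal R} {s t : ℕ}
variable {A B C : Type u} [AddCommGroup A] [Module R A] [AddCommGroup B] [Module R B]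
  [AddCommGroup C] [Module R C]

/-- The depth of `A` along the ideal `I` is at least `t`, in the homological form of Rees:
`Ext^i(R/I, A) = 0` for all `i < t`. The zero module has infinite depth. -/
def DepthGE (I : Ideal R) (t : ℕ) (A : Type u) [AddCommGroup A] [Module R A] : Prop :=
  ∀ i < t, Subsingleton (Ext.{u} (ModuleCat.of R (R ⧸ I)) (ModuleCat.of R A) i)

lemma DepthGE.mono (h : DepthGE I t A) (hst : s ≤ t) : DepthGE I s A :=
  fun i hi => h i (hi.trans_le hst)

lemma DepthGE.of_subsingleton [Subsingleton A] : DepthGE I t A := fun i _ => by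
  have hA : Limits.IsZero (ModuleCat.of R A) := ModuleCat.isZero_of_subsingleton _
  refine subsingleton_of_forall_eq 0 fun a => ?_
  rw [← a.comp_mk₀_id, hA.eq_of_src (𝟙 _) 0, Ext.mk₀_zero, Ext.comp_zero]

lemma DepthGE.of_exact {f : A →ₗ[R] B} {g : B →ₗ[R] C} (hf : Function.Injective f)
    (hfg : Function.Exact f g) (hg : Function.Surjective g)
    (hA : DepthGE I (t + 1) A) (hB : DepthGE I t B) : DepthGE I t C := fun i hi => by
  have hS : (ModuleCat.shortComplexOfCompEqZero f g hfg.linearMap_comp_eq_zero).ShortExact :=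
    { exact := ModuleCat.shortComplex_exact _ hfg
      mono_f := by simpa [ModuleCat.mono_iff_injective] using hf
      epi_g := by simpa [ModuleCat.epi_iff_surjective] using hg }
  have := hA (i + 1) (by omega)
  have := hB i hi
  refine subsingleton_of_forall_eq 0 fun a => ?_
  obtain ⟨b, rfl⟩ := Ext.covariant_sequence_exact₃ _ hS a rfl (Subsingleton.elim _ _)
  rw [Subsingleton.elim b 0, Ext.zero_comp]

/-- The identity of a free module is a finite sum of maps factoring through `R`. -/
lemma DepthGE.of_free [Module.Free R A] [Module.Finite R A] (hR : DepthGE I t R) :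
    DepthGE I t A := fun i hi => by
  have := hR i hi
  let b := Free.chooseBasis R A
  let proj (k) : ModuleCat.of R A ⟶ ModuleCat.of R R := ModuleCat.ofHom (b.coord k)
  let incl (k) : ModuleCat.of R R ⟶ ModuleCat.of R A :=
    ModuleCat.ofHom (LinearMap.toSpanSingleton R A (b k))
  have hid : 𝟙 (ModuleCat.of R A) = ∑ k, proj k ≫ incl k := by
    ext a
    simp [proj, incl, ModuleCat.hom_sum, b.sum_repr]
  refine subsingleton_of_forall_eq 0 fun a => ?_
  rw [← a.comp_mk₀_id, hid, Ext.mk₀_sum, Ext.comp_sum]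
  refine Finset.sum_eq_zero fun k _ => ?_
  rw [← Ext.mk₀_comp_mk₀, ← Ext.comp_assoc_of_second_deg_zero,
    Subsingleton.elim (a.comp _ _) 0, Ext.zero_comp]

lemma DepthGE.eq_zero_of_smul_eq_zero (h : DepthGE I 1 A) {a : A} (ha : ∀ x ∈ I, x • a = 0) :
    a = 0 := by
  have := h 0 one_pos
  have : Subsingleton (ModuleCat.of R (R ⧸ I) ⟶ ModuleCat.of R A) :=
    Ext.homEquiv₀.symm.subsingleton
  have : Subsingleton ((R ⧸ I) →ₗ[R] A) := (ModuleCat.homEquiv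
    (M := ModuleCat.of R (R ⧸ I)) (N := ModuleCat.of R A)).symm.subsingleton
  let φ : (R ⧸ I) →ₗ[R] A := I.liftQ (LinearMap.toSpanSingleton R A a) ha
  calc
    a = φ (Submodule.Quotient.mk 1) := (one_smul R a).symm
    _ = 0 := by rw [Subsingleton.elim φ 0, LinearMap.zero_apply]

lemma DepthGE.eq_zero_of_le_radical_torsionOf (hI : I.FG) (h : DepthGE I 1 A) {a : A}
    (ha : I ≤ (Ideal.torsionOf R A a).radical) : a = 0 := by
  obtain ⟨N, hN⟩ := Ideal.exists_pow_le_of_le_radical_of_fg ha hI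
  clear ha
  induction N generalizing a with
  | zero => simpa using hN (by simp : (1 : R) ∈ I ^ 0)
  | succ N ih =>
    refine h.eq_zero_of_smul_eq_zero fun x hx => ih fun y hy => ?_
    rw [Ideal.mem_torsionOf_iff, smul_smul]
    exact hN (Ideal.mul_mem_mul hy hx)

end Depth

section VariablesRegular

variable {K : Type u} [CommRing K] {n : ℕ}

lemma isSMulRegular_X_quotient_span_X {σ : Type*} {s : Set σ} {i : σ} (hi : i ∉ s) :
    IsSMulRegular (MvPolynomial σ K ⧸ Ideal.span (X '' s : Set (MvPolynomial σ K)))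
      (X i : MvPolynomial σ K) := by
  rw [isSMulRegular_iff_right_eq_zero_of_smul]
  intro q hq
  obtain ⟨q, rfl⟩ := Submodule.Quotient.mk_surjective _ q
  rw [← Submodule.Quotient.mk_smul, Submodule.Quotient.mk_eq_zero, smul_eq_mul,
    mem_ideal_span_X_image] at hq
  rw [Submodule.Quotient.mk_eq_zero, mem_ideal_span_X_image]
  intro e he
  have hXe : Finsupp.single i 1 + e ∈ (X i * q).support := by
    rwa [mem_support_iff, coeff_X_mul, ← mem_support_iff]
  obtain ⟨j, hj, hej⟩ := hq _ hXe
  have hij : i ≠ j := fun h => hi (h ▸ hj)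
  exact ⟨j, hj, by simpa [Finsupp.single_apply, hij] using hej⟩

lemma isWeaklyRegular_ofFn_X : RingTheory.Sequence.IsWeaklyRegular (MvPolynomial (Fin n) K)
    (List.ofFn (X : Fin n → MvPolynomial (Fin n) K)) := by
  refine ⟨fun i hi => ?_⟩
  have htake : Ideal.ofList ((List.ofFn (X : Fin n → MvPolynomial (Fin n) K)).take i) •
      (⊤ : Ideal (MvPolynomial (Fin n) K)) = Ideal.span (X '' {j : Fin n | (j : ℕ) < i}) := by
    rw [smul_eq_mul, Ideal.mul_top]
    refine congrArg Ideal.span (Set.ext fun x => ?_)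
    simp only [Set.mem_ofPred_eq, Set.mem_image, List.mem_take_iff_getElem, List.length_ofFn,
      List.getElem_ofFn, lt_inf_iff]
    exact ⟨fun ⟨j, hj, h⟩ => ⟨⟨j, hj.2⟩, hj.1, h⟩, fun ⟨j, hj, h⟩ => ⟨j, ⟨hj, j.isLt⟩, h⟩⟩
  rw [htake, List.getElem_ofFn]
  exact isSMulRegular_X_quotient_span_X (lt_irrefl i)

lemma depthGE_idealOfVars [Nontrivial K] [IsNoetherianRing K] :
    DepthGE (idealOfVars (Fin n) K) n (MvPolynomial (Fin n) K) := by
  have hX : Ideal.ofList (List.ofFn X) = idealOfVars (Fin n) K :=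
    congrArg Ideal.span (Set.ext fun _ => List.mem_ofFn' _ _)
  have htop : idealOfVars (Fin n) K • (⊤ : Ideal (MvPolynomial (Fin n) K)) ≠ ⊤ := by
    rw [smul_eq_mul, Ideal.mul_top, Ideal.ne_top_iff_one]
    simpa using (C_mem_pow_idealOfVars_iff (σ := Fin n) 1 (1 : K)).not
  intro i hi
  refine ModuleCat.subsingleton_ext_of_exists_isRegular (idealOfVars (Fin n) K) _ ?_ _
    htop.lt_top (List.ofFn X) ?_ ⟨isWeaklyRegular_ofFn_X, by rw [hX]; exact htop.symm⟩ i
    (by simpa using hi)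
  · rw [Module.support_eq_zeroLocus, Ideal.annihilator_quotient]
  · exact fun r hr => Ideal.subset_span ((List.mem_ofFn' _ _).mp hr)

end VariablesRegular

section Contraction

open ExteriorAlgebra Module CliffordAlgebra

variable {R G : Type*} [CommRing R] [AddCommGroup G] [Module R G] {p : ℕ}

/-- Left contraction of the exterior algebra by a linear form, that is, the contraction of the
Clifford algebra of the zero quadratic form. -/
abbrev contract (φ : Dual R G) : ExteriorAlgebra R G →ₗ[R] ExteriorAlgebra R G :=
  contractLeft (Q := (0 : QuadraticForm R G)) φ

lemma contract_ι_mul (φ : Dual R G) (g : G) (x : ExteriorAlgebra R G) :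
    contract φ (ExteriorAlgebra.ι R g * x) = φ g • x - ExteriorAlgebra.ι R g * contract φ x :=
  contractLeft_ι_mul φ g x

lemma contract_ιMulti (φ : Dual R G) (v : Fin (p + 1) → G) :
    contract φ (ιMulti R (p + 1) v) =
      ∑ k : Fin (p + 1), ((-1) ^ (k : ℕ) * φ (v k)) • ιMulti R p (v ∘ k.succAbove) := by
  induction p with
  | zero =>
    rw [ιMulti_succ_apply, contract_ι_mul]
    simp [ιMulti_zero_apply, contractLeft_one]
  | succ p ih =>
    rw [ιMulti_succ_apply, contract_ι_mul, ih, sub_eq_add_neg, Finset.mul_sum,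
      ← Finset.sum_neg_distrib, Fin.sum_univ_succ (n := p + 1)]
    congr 1
    · simp [Matrix.vecTail, Function.comp_def]
    · refine Finset.sum_congr rfl fun k _ => ?_
      rw [ιMulti_succ_apply (n := p), mul_smul_comm, ← neg_smul]
      simp [Matrix.vecTail, Function.comp_def, pow_succ]

lemma contract_mem_exteriorPower (φ : Dual R G) {x : ExteriorAlgebra R G}
    (hx : x ∈ ⋀[R]^(p + 1) G) : contract φ x ∈ ⋀[R]^p G := by
  rw [← ιMulti_span_fixedDegree] at hx
  refine (Submodule.span_le (p := (⋀[R]^p G).comap (contract φ))).mpr ?_ hx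
  rintro _ ⟨v, rfl⟩
  rw [SetLike.mem_coe, Submodule.mem_comap, contract_ιMulti]
  exact sum_mem fun k _ => Submodule.smul_mem _ _ (ιMulti_range R p ⟨_, rfl⟩)

lemma ι_mul_mem_exteriorPower (g : G) {x : ExteriorAlgebra R G} (hx : x ∈ ⋀[R]^p G) :
    ExteriorAlgebra.ι R g * x ∈ ⋀[R]^(p + 1) G := by
  rw [exteriorPower, pow_succ']
  exact Submodule.mul_mem_mul (LinearMap.mem_range_self _ g) hx

/-- Contraction by the linear forms of a list, one after the other, head first. -/
def iteratedContract : List (Dual R G) → ExteriorAlgebra R G →ₗ[R] ExteriorAlgebra R G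
  | [] => LinearMap.id
  | φ :: L => iteratedContract L ∘ₗ contract φ

lemma iteratedContract_nil (x : ExteriorAlgebra R G) : iteratedContract [] x = x := rfl

lemma iteratedContract_cons (φ : Dual R G) (L : List (Dual R G)) (x : ExteriorAlgebra R G) :
    iteratedContract (φ :: L) x = iteratedContract L (contract φ x) := rfl

lemma iteratedContract_concat (L : List (Dual R G)) (φ : Dual R G) (x : ExteriorAlgebra R G) :
    iteratedContract (L.concat φ) x = contract φ (iteratedContract L x) := by
  induction L generalizing x with
  | nil => rfl
  | cons ψ L ih => rw [List.concat_cons, iteratedContract_cons, iteratedContract_cons, ih]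

lemma iteratedContract_mem_exteriorPower (L : List (Dual R G)) {x : ExteriorAlgebra R G}
    (hx : x ∈ ⋀[R]^(p + L.length) G) : iteratedContract L x ∈ ⋀[R]^p G := by
  induction L generalizing x with
  | nil => exact hx
  | cons φ L ih => exact ih (contract_mem_exteriorPower φ hx)

lemma iteratedContract_contract_of_mem {φ : Dual R G} {L : List (Dual R G)} (hφ : φ ∈ L)
    (x : ExteriorAlgebra R G) : iteratedContract L (contract φ x) = 0 := by
  induction L generalizing x with
  | nil => simp at hφ
  | cons ψ L ih =>
    rw [iteratedContract_cons]
    rcases List.mem_cons.mp hφ with rfl | hφ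
    · rw [contractLeft_contractLeft, map_zero]
    · rw [contractLeft_comm, map_neg, ih hφ, neg_zero]

lemma iteratedContract_ofFn_ιMulti (φ : Fin p → Dual R G) (v : Fin p → G) :
    iteratedContract (List.ofFn φ) (ιMulti R p v) =
      algebraMap R _ (Matrix.of fun i j => φ i (v j)).det := by
  induction p with
  | zero => simp [iteratedContract_nil, ιMulti_zero_apply]
  | succ p ih =>
    rw [List.ofFn_succ, iteratedContract_cons, contract_ιMulti, map_sum,
      Matrix.det_succ_row_zero, map_sum]
    refine Finset.sum_congr rfl fun k _ => ?_
    rw [map_smul, ih, Algebra.smul_def, ← map_mul]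
    rfl

end Contraction

section ContractionCokernel

open ExteriorAlgebra Module CliffordAlgebra

variable {R G σ : Type*} [CommRing R] [AddCommGroup G] [Module R G] {p : ℕ}
  {r : σ → Dual R G} {S T : Set σ} {a : σ} {g : G} {Δ : R} {x : ExteriorAlgebra R G}

/-- The submodule `∑_{i ∈ S} r_i ⌟ ⋀^{p+1} G` of `⋀^p G`. -/
def contractionImage (r : σ → Dual R G) (S : Set σ) (p : ℕ) : Submodule R (ExteriorAlgebra R G) :=
  ⨆ i ∈ S, (⋀[R]^(p + 1) G).map (contract (r i))

lemma contractionImage_le {N : Submodule R (ExteriorAlgebra R G)}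
    (h : ∀ i ∈ S, ∀ x ∈ ⋀[R]^(p + 1) G, contract (r i) x ∈ N) : contractionImage r S p ≤ N :=
  iSup₂_le fun i hi => Submodule.map_le_iff_le_comap.mpr (h i hi)

lemma contract_mem_contractionImage (ha : a ∈ S) (hx : x ∈ ⋀[R]^(p + 1) G) :
    contract (r a) x ∈ contractionImage r S p :=
  le_iSup₂ (f := fun i (_ : i ∈ S) => (⋀[R]^(p + 1) G).map (contract (r i))) a ha
    (Submodule.mem_map_of_mem hx)

lemma contractionImage_mono (h : S ⊆ T) : contractionImage r S p ≤ contractionImage r T p :=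
  contractionImage_le fun _ hi _ hx => contract_mem_contractionImage (h hi) hx

lemma contractionImage_empty : contractionImage r ∅ p = ⊥ := by
  simp [contractionImage]

lemma contractionImage_insert : contractionImage r (insert a S) p =
    (⋀[R]^(p + 1) G).map (contract (r a)) ⊔ contractionImage r S p :=
  iSup_insert

lemma contract_mem_of_mem_contractionImage_insert
    (hx : x ∈ contractionImage r (insert a S) (p + 1)) :
    contract (r a) x ∈ contractionImage r S p := by
  refine contractionImage_le (N := (contractionImage r S p).comap (contract (r a))) ?_ hx
  intro i hi y hy
  rw [Submodule.mem_comap]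
  rcases hi with rfl | hi
  · rw [contractLeft_contractLeft]
    exact zero_mem _
  · rw [contractLeft_comm]
    exact neg_mem (contract_mem_contractionImage hi (contract_mem_exteriorPower _ hy))

lemma ι_mul_mem_contractionImage (hg : ∀ i ∈ S, r i g = 0) (hx : x ∈ contractionImage r S p) :
    ExteriorAlgebra.ι R g * x ∈ contractionImage r S (p + 1) := by
  refine contractionImage_le
    (N := (contractionImage r S (p + 1)).comap (LinearMap.mulLeft R (ExteriorAlgebra.ι R g))) ?_ hx
  intro i hi y hy
  have hcomm : ExteriorAlgebra.ι R g * contract (r i) y =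
      -contract (r i) (ExteriorAlgebra.ι R g * y) := by
    rw [contract_ι_mul, hg i hi, zero_smul, zero_sub, neg_neg]
  rw [Submodule.mem_comap, LinearMap.mulLeft_apply, hcomm]
  exact neg_mem (contract_mem_contractionImage hi (ι_mul_mem_exteriorPower g hy))

/-- Multiplication by `g` is a homotopy between `r_a(g)` and zero. -/
lemma smul_mem_contractionImage_insert (hg : ∀ i ∈ S, r i g = 0) (hx : x ∈ ⋀[R]^(p + 1) G)
    (hax : contract (r a) x ∈ contractionImage r S p) :
    r a g • x ∈ contractionImage r (insert a S) (p + 1) := by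
  have hsum : r a g • x = contract (r a) (ExteriorAlgebra.ι R g * x)
      + ExteriorAlgebra.ι R g * contract (r a) x := by
    rw [contract_ι_mul, sub_add_cancel]
  rw [hsum]
  exact add_mem
    (contract_mem_contractionImage (Set.mem_insert a S) (ι_mul_mem_exteriorPower g hx))
    (contractionImage_mono (Set.subset_insert a S) (ι_mul_mem_contractionImage hg hax))

lemma iteratedContract_eq_zero_of_mem_contractionImage {L : List (Dual R G)}
    (hL : ∀ i ∈ S, r i ∈ L) (hx : x ∈ contractionImage r S p) : iteratedContract L x = 0 :=
  contractionImage_le (N := LinearMap.ker (iteratedContract L))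
    (fun i hi y _ => iteratedContract_contract_of_mem (hL i hi) y) hx

lemma pow_smul_mem_contractionImage {e : σ → G} (he : ∀ a, r a (e a) = Δ)
    (hne : ∀ a i, i ≠ a → r i (e a) = 0) {L : List σ} (hL : L.Nodup) (hS : ∀ a ∈ L, a ∉ S)
    (hx : x ∈ ⋀[R]^(p + L.length) G)
    (hLx : iteratedContract (L.map r) x ∈ contractionImage r S p) :
    Δ ^ L.length • x ∈ contractionImage r (S ∪ {a | a ∈ L}) (p + L.length) := by
  induction L generalizing x with
  | nil => simpa [iteratedContract_nil] using hLx
  | cons a L ih =>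
    obtain ⟨haL, hL⟩ := List.nodup_cons.mp hL
    have ha : ∀ i ∈ S ∪ {b | b ∈ L}, r i (e a) = 0 := by
      refine fun i hi => hne a i ?_
      rintro rfl
      exact hi.elim (hS i List.mem_cons_self) haL
    have hax : contract (r a) (Δ ^ L.length • x) ∈
        contractionImage r (S ∪ {b | b ∈ L}) (p + L.length) := by
      rw [map_smul]
      exact ih hL (fun b hb => hS b (List.mem_cons_of_mem _ hb))
        (contract_mem_exteriorPower _ hx) hLx
    have hmem := smul_mem_contractionImage_insert ha (Submodule.smul_mem _ _ hx) hax
    rw [he, smul_smul, ← pow_succ', ← Set.union_insert] at hmem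
    have hcons : {b | b ∈ a :: L} = insert a {b | b ∈ L} := by ext; simp
    rw [hcons]
    exact hmem

/-- The quotient of `⋀^p G` by `∑_{i ∈ S} r_i ⌟ ⋀^{p+1} G`. -/
abbrev ContractionCokernel (r : σ → Dual R G) (S : Set σ) (p : ℕ) :=
  ↥(⋀[R]^p G) ⧸ (contractionImage r S p).submoduleOf (⋀[R]^p G)

/-- The map `⋀^{p+1} G / ∑_{i ∈ S ∪ {a}} → ⋀^p G / ∑_{i ∈ S}` induced by contraction by `r_a`. -/
def cokernelContract (r : σ → Dual R G) (a : σ) (S : Set σ) (p : ℕ) :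
    ContractionCokernel r (insert a S) (p + 1) →ₗ[R] ContractionCokernel r S p :=
  Submodule.mapQ _ _ ((contract (r a)).restrict fun _ => contract_mem_exteriorPower (r a))
    fun _ => contract_mem_of_mem_contractionImage_insert

/-- The projection `⋀^p G / ∑_{i ∈ S} → ⋀^p G / ∑_{i ∈ S ∪ {a}}`. -/
def cokernelProj (r : σ → Dual R G) (a : σ) (S : Set σ) (p : ℕ) :
    ContractionCokernel r S p →ₗ[R] ContractionCokernel r (insert a S) p :=
  Submodule.mapQ _ _ LinearMap.id
    fun _ hx => contractionImage_mono (Set.subset_insert a S) hx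

lemma cokernelProj_surjective : Function.Surjective (cokernelProj r a S p) := fun q => by
  obtain ⟨x, rfl⟩ := Submodule.Quotient.mk_surjective _ q
  exact ⟨Submodule.Quotient.mk x, rfl⟩

lemma cokernelContract_exact_cokernelProj :
    Function.Exact (cokernelContract r a S p) (cokernelProj r a S p) := by
  intro q
  obtain ⟨x, rfl⟩ := Submodule.Quotient.mk_surjective _ q
  have hproj : cokernelProj r a S p (Submodule.Quotient.mk x) = 0 ↔
      (x : ExteriorAlgebra R G) ∈ contractionImage r (insert a S) p :=
    Submodule.Quotient.mk_eq_zero _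
  rw [hproj]
  constructor
  · rw [contractionImage_insert, Submodule.mem_sup]
    rintro ⟨_, ⟨y, hy, rfl⟩, b, hb, hyb⟩
    refine ⟨Submodule.Quotient.mk ⟨y, hy⟩, (Submodule.Quotient.eq _).mpr ?_⟩
    change contract (r a) y - (x : ExteriorAlgebra R G) ∈ contractionImage r S p
    rw [← hyb, sub_add_cancel_left]
    exact neg_mem hb
  · rintro ⟨q, hq⟩
    obtain ⟨y, rfl⟩ := Submodule.Quotient.mk_surjective _ q
    rw [← hproj, ← hq]
    exact (Submodule.Quotient.mk_eq_zero _).mpr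
      (contract_mem_contractionImage (Set.mem_insert a S) y.2)

lemma smul_eq_zero_of_cokernelContract_eq_zero (hg : ∀ i ∈ S, r i g = 0)
    {q : ContractionCokernel r (insert a S) (p + 1)} (hq : cokernelContract r a S p q = 0) :
    r a g • q = 0 := by
  obtain ⟨x, rfl⟩ := Submodule.Quotient.mk_surjective _ q
  rw [← Submodule.Quotient.mk_smul, Submodule.Quotient.mk_eq_zero]
  exact smul_mem_contractionImage_insert hg x.2
    ((Submodule.Quotient.mk_eq_zero ((contractionImage r S p).submoduleOf (⋀[R]^p G))).mp hq)

end ContractionCokernel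

section MatrixCircuits

open ExteriorAlgebra Module CliffordAlgebra

variable {R κ : Type*} [CommRing R] {m : ℕ} (M : Matrix (Fin m) κ R)

lemma minorsIdeal_le {I : Ideal R} (h : ∀ C : Fin m → κ, (M.submatrix id C).det ∈ I) :
    minorsIdeal m M ≤ I := by
  refine Ideal.span_le.mpr ?_
  rintro _ ⟨ρ, C, hρ, -, rfl⟩
  let e : Equiv.Perm (Fin m) := Equiv.ofBijective ρ (Finite.injective_iff_bijective.mp hρ)
  have hdet : (M.submatrix ρ C).det = e.sign * (M.submatrix id C).det :=
    Matrix.det_permute e (M.submatrix id C)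
  rw [SetLike.mem_coe, hdet]
  exact I.mul_mem_left _ (h C)

variable [Fintype κ]

/-- The linear form on `R^κ` given by the `i`-th row of a matrix. -/
def rowForm (i : Fin m) : Dual R (κ → R) := LinearMap.proj i ∘ₗ M.mulVecLin

/-- Contraction by all the rows of a matrix, followed by the projection to the degree one part. -/
def rowContract : ExteriorAlgebra R (κ → R) →ₗ[R] κ → R :=
  ιInv ∘ₗ iteratedContract (List.ofFn (rowForm M))

lemma ι_rowContract {x : ExteriorAlgebra R (κ → R)} (hx : x ∈ ⋀[R]^(m + 1) (κ → R)) :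
    ExteriorAlgebra.ι R (rowContract M x) = iteratedContract (List.ofFn (rowForm M)) x := by
  have hmem : iteratedContract (List.ofFn (rowForm M)) x ∈ ⋀[R]^1 (κ → R) :=
    iteratedContract_mem_exteriorPower _ (by rwa [List.length_ofFn, add_comm])
  rw [exteriorPower, pow_one] at hmem
  obtain ⟨v, hv⟩ := hmem
  rw [rowContract, LinearMap.comp_apply, ← hv, ι_leftInverse]

lemma apply_rowContract_ιMulti (φ : Dual R (κ → R)) (v : Fin (m + 1) → κ → R) :
    φ (rowContract M (ιMulti R (m + 1) v)) =
      (Matrix.of fun i j => (Fin.snoc (rowForm M) φ : Fin (m + 1) → Dual R (κ → R)) i (v j)).det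
    := by
  have hdet := iteratedContract_ofFn_ιMulti (Fin.snoc (rowForm M) φ) v
  rw [List.ofFn_succ', iteratedContract_concat] at hdet
  simp only [Fin.snoc_castSucc, Fin.snoc_last] at hdet
  rw [← ι_rowContract M (ιMulti_range R (m + 1) ⟨v, rfl⟩), contractLeft_ι] at hdet
  exact (algebraMap_inj (κ → R) _ _).mp hdet

lemma map_rowContract_exteriorPower_le_ker :
    (⋀[R]^(m + 1) (κ → R)).map (rowContract M) ≤ LinearMap.ker M.mulVecLin := by
  rw [← ιMulti_span_fixedDegree, Submodule.map_span, Submodule.span_le]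
  rintro _ ⟨_, ⟨v, rfl⟩, rfl⟩
  funext i
  refine (apply_rowContract_ιMulti M (rowForm M i) v).trans ?_
  refine Matrix.det_zero_of_row_eq (Fin.castSucc_lt_last i).ne (funext fun j => ?_)
  rw [Matrix.of_apply, Matrix.of_apply, Fin.snoc_castSucc, Fin.snoc_last]

lemma rowContract_eq_zero_of_mem_contractionImage {x : ExteriorAlgebra R (κ → R)} {p : ℕ}
    (hx : x ∈ contractionImage (rowForm M) Set.univ p) : rowContract M x = 0 := by
  rw [rowContract, LinearMap.comp_apply,
    iteratedContract_eq_zero_of_mem_contractionImage (fun i _ => List.mem_ofFn.mpr ⟨i, rfl⟩) hx,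
    map_zero]

section DecidableEq

variable [DecidableEq κ]

lemma rowForm_single (i : Fin m) (c : κ) : rowForm M i (Pi.single c 1) = M i c := by
  simp [rowForm]

/-- The combination, with coefficients the `a`-th column of the adjugate, of the basis vectors
indexed by the columns `C`. -/
def adjugateVector (C : Fin m → κ) (a : Fin m) : κ → R :=
  ∑ j, (M.submatrix id C).adjugate j a • Pi.single (C j) 1

lemma rowForm_adjugateVector (C : Fin m → κ) (i a : Fin m) :
    rowForm M i (adjugateVector M C a) = if i = a then (M.submatrix id C).det else 0 := by
  have hmul := congrFun₂ (Matrix.mul_adjugate (M.submatrix id C)) i a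
  rw [Matrix.mul_apply, Matrix.smul_apply, Matrix.one_apply, smul_eq_mul, mul_ite, mul_one,
    mul_zero] at hmul
  simp_rw [← hmul, adjugateVector, map_sum, map_smul, rowForm_single, smul_eq_mul]
  exact Finset.sum_congr rfl fun j _ => mul_comm _ _

lemma rowContract_ιMulti_snoc (C : Fin m → κ) {w : κ → R} (hw : M.mulVec w = 0) :
    rowContract M (ιMulti R (m + 1) (Fin.snoc (fun i => Pi.single (C i) 1) w)) =
      (M.submatrix id C).det • w := by
  funext c
  change LinearMap.proj (R := R) c (rowContract M _) = _
  rw [apply_rowContract_ιMulti, Matrix.det_succ_column _ (Fin.last m), Fin.sum_univ_castSucc,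
    Finset.sum_eq_zero]
  · simp only [Matrix.of_apply, Fin.snoc_last, LinearMap.proj_apply, Fin.val_last, zero_add,
      Pi.smul_apply, smul_eq_mul]
    rw [Even.neg_one_pow ⟨m, rfl⟩, one_mul, mul_comm]
    congr 2
    ext i j
    simp [rowForm_single, Fin.succAbove_last]
  · intro i _
    have hi : rowForm M i w = 0 := congrFun hw i
    simp [hi]

end DecidableEq

lemma det_pow_smul_mem_contractionImage (C : Fin m → κ) {x : ExteriorAlgebra R (κ → R)}
    (hx : x ∈ ⋀[R]^(m + 1) (κ → R)) (h : rowContract M x = 0) :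
    (M.submatrix id C).det ^ m • x ∈ contractionImage (rowForm M) Set.univ (m + 1) := by
  classical
  have hzero : iteratedContract ((List.finRange m).map (rowForm M)) x = 0 := by
    rw [← List.ofFn_eq_map, ← ι_rowContract M hx, h, map_zero]
  have hmem := pow_smul_mem_contractionImage (S := ∅) (p := 1)
    (e := adjugateVector M C) (Δ := (M.submatrix id C).det)
    (fun a => (rowForm_adjugateVector M C a a).trans (if_pos rfl))
    (fun a i hi => (rowForm_adjugateVector M C i a).trans (if_neg hi))
    (List.nodup_finRange m) (fun a _ => Set.notMem_empty a)
    (by rwa [List.length_finRange, add_comm]) (hzero ▸ zero_mem _)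
  rw [List.length_finRange, add_comm 1 m] at hmem
  exact contractionImage_mono (Set.subset_univ _) hmem

variable [LinearOrder κ]

/-- The circuit vector of a matrix supported on the `m + 1` columns `T`: its entry at the `k`-th
element of `T` is `(-1) ^ k` times the minor on the other columns. -/
def matrixCircuit (T : Finset κ) (hT : T.card = m + 1) : κ → R := fun c =>
  ∑ k : Fin (m + 1),
    if c = T.orderEmbOfFin hT k then
      (-1) ^ (k : ℕ) * (M.submatrix id fun l : Fin m => T.orderEmbOfFin hT (k.succAbove l)).det
    else 0

lemma rowContract_ιMulti_single_orderEmbOfFin (T : Finset κ) (hT : T.card = m + 1) :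
    rowContract M (ιMulti R (m + 1) ((fun c => Pi.single c 1) ∘ T.orderEmbOfFin hT)) =
      (-1 : Rˣ) ^ m • matrixCircuit M T hT := by
  funext c
  change LinearMap.proj (R := R) c (rowContract M _) = _
  rw [apply_rowContract_ιMulti, Matrix.det_succ_row _ (Fin.last m), Pi.smul_apply, matrixCircuit,
    Finset.smul_sum]
  refine Finset.sum_congr rfl fun k _ => ?_
  simp only [Matrix.of_apply, Fin.snoc_last, Function.comp_apply, LinearMap.proj_apply,
    Pi.single_apply, Fin.val_last]
  split_ifs with h
  · rw [pow_add, mul_one, Units.smul_def, smul_eq_mul, mul_assoc]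
    push_cast
    congr 3
    ext i j
    simp [rowForm_single, Fin.succAbove_last]
  · simp

lemma map_rowContract_exteriorPower :
    (⋀[R]^(m + 1) (κ → R)).map (rowContract M) =
      Submodule.span R {v | ∃ T : Finset κ, ∃ hT : T.card = m + 1, v = matrixCircuit M T hT} := by
  have hspan : Submodule.span R (Set.range fun c : κ => (Pi.single c 1 : κ → R)) = ⊤ := by
    rw [← (Pi.basisFun R κ).span_eq]
    congr
    ext c : 1
    simp
  rw [← exteriorPower.ιMulti_family_span_fixedDegree_of_span R hspan, Submodule.map_span]
  refine le_antisymm (Submodule.span_le.mpr ?_) (Submodule.span_le.mpr ?_)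
  · rintro _ ⟨_, ⟨T, rfl⟩, rfl⟩
    have h := rowContract_ιMulti_single_orderEmbOfFin M T.1 T.2
    exact h ▸ Submodule.smul_of_tower_mem _ ((-1 : Rˣ) ^ m) (Submodule.subset_span ⟨_, T.2, rfl⟩)
  · rintro _ ⟨T, hT, rfl⟩
    have h := rowContract_ιMulti_single_orderEmbOfFin M T hT
    rw [eq_comm, ← eq_inv_smul_iff] at h
    rw [h]
    exact Submodule.smul_of_tower_mem _ _ (Submodule.subset_span ⟨_, ⟨⟨T, hT⟩, rfl⟩, rfl⟩)

end MatrixCircuits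

section Resolution

open ExteriorAlgebra Module

variable {R : Type u} [CommRing R] {I : Ideal R} {κ : Type} {m p q t e : ℕ}
  {M : Matrix (Fin m) κ R} {S : Set (Fin m)}

lemma DepthGE.eq_zero_of_det_pow_smul_eq_zero {A : Type u} [AddCommGroup A] [Module R A]
    (hI : I.FG) (hIM : I ≤ (minorsIdeal m M).radical) (h : DepthGE I 1 A) {a : A}
    (ha : ∀ C : Fin m → κ, (M.submatrix id C).det ^ e • a = 0) : a = 0 := by
  refine h.eq_zero_of_le_radical_torsionOf hI (hIM.trans ?_)
  rw [Ideal.radical_le_radical_iff]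
  exact minorsIdeal_le M fun C => ⟨e, ha C⟩

variable [Fintype κ]

lemma DepthGE.contractionCokernel_of_card_lt (hp : Fintype.card κ < p) :
    DepthGE I t (ContractionCokernel (rowForm M) S p) := by
  cases subsingleton_or_nontrivial R
  · have := Module.subsingleton R (ContractionCokernel (rowForm M) S p)
    exact .of_subsingleton
  have hrank : finrank R (⋀[R]^p (κ → R)) = 0 := by
    rw [exteriorPower.finrank_eq, finrank_fintype_fun_eq_card]
    exact Nat.choose_eq_zero_of_lt hp
  have : Subsingleton (⋀[R]^p (κ → R)) := (finrank_eq_zero_iff_of_free R _).mp hrank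
  have : Subsingleton (ContractionCokernel (rowForm M) S p) :=
    (Submodule.mkQ_surjective _).subsingleton
  exact .of_subsingleton

lemma injective_cokernelContract (hI : I.FG) (hIM : I ≤ (minorsIdeal m M).radical)
    {a : Fin m} (ha : a ∉ S)
    (h : DepthGE I 1 (ContractionCokernel (rowForm M) (insert a S) (p + 1))) :
    Function.Injective (cokernelContract (rowForm M) a S p) := by
  classical
  refine (injective_iff_map_eq_zero _).mpr fun x hx => ?_
  refine h.eq_zero_of_det_pow_smul_eq_zero hI hIM (e := 1) fun C => ?_
  have hzero := smul_eq_zero_of_cokernelContract_eq_zero (g := adjugateVector M C a)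
    (fun i hi => (rowForm_adjugateVector M C i a).trans (if_neg (ne_of_mem_of_not_mem hi ha))) hx
  rwa [rowForm_adjugateVector, if_pos rfl, ← pow_one (Matrix.det _)] at hzero

/-- Downward induction on `p`: the exact sequences
`⋀^{p+1} / ∑_{S ∪ {a}} → ⋀^p / ∑_S → ⋀^p / ∑_{S ∪ {a}}` lose one unit of depth for each step of
`p`, starting from the modules with `p > |κ|`, which vanish. -/
lemma DepthGE.contractionCokernel (hI : I.FG) (hR : DepthGE I q R)
    (hIM : I ≤ (minorsIdeal m M).radical) (hcard : Fintype.card κ + 1 ≤ m + q)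
    (htp : t + m ≤ p + 1) : DepthGE I t (ContractionCokernel (rowForm M) S p) := by
  obtain ⟨k, hk⟩ : ∃ k, Fintype.card κ < p + k := ⟨Fintype.card κ + 1, by omega⟩
  induction k generalizing p S t with
  | zero => exact .contractionCokernel_of_card_lt hk
  | succ k ihk =>
    rcases lt_or_ge (Fintype.card κ) p with hp | hp
    · exact .contractionCokernel_of_card_lt hp
    induction S, S.toFinite using Set.Finite.induction_on generalizing t with
    | empty =>
      have hbot : (contractionImage (rowForm M) ∅ p).submoduleOf (⋀[R]^p (κ → R)) = ⊥ := by
        rw [contractionImage_empty, Submodule.submoduleOf, Submodule.comap_bot,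
          Submodule.ker_subtype]
      have := Free.of_equiv (Submodule.quotEquivOfEqBot _ hbot).symm
      exact hR.of_free.mono (by omega)
    | @insert a S ha _ ihS =>
      have hsucc {t : ℕ} (ht : t + m ≤ p + 2) :
          DepthGE I t (ContractionCokernel (rowForm M) (insert a S) (p + 1)) :=
        ihk ht (by omega)
      exact .of_exact (injective_cokernelContract hI hIM ha (hsucc (by omega)))
        cokernelContract_exact_cokernelProj cokernelProj_surjective (hsucc (by omega)) (ihS htp)

/-- The map induced by `rowContract M` on the last cokernel of contractions. -/
def cokernelRowContract (M : Matrix (Fin m) κ R) :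
    ContractionCokernel (rowForm M) Set.univ (m + 1) →ₗ[R] κ → R :=
  Submodule.liftQ _ (rowContract M ∘ₗ (⋀[R]^(m + 1) (κ → R)).subtype)
    fun _ hx => rowContract_eq_zero_of_mem_contractionImage M hx

lemma range_cokernelRowContract (M : Matrix (Fin m) κ R) :
    LinearMap.range (cokernelRowContract M) = (⋀[R]^(m + 1) (κ → R)).map (rowContract M) := by
  refine (Submodule.range_liftQ _ _ _).trans ?_
  rw [LinearMap.range_comp, Submodule.range_subtype]

lemma injective_cokernelRowContract (hI : I.FG) (hIM : I ≤ (minorsIdeal m M).radical)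
    (h : DepthGE I 1 (ContractionCokernel (rowForm M) Set.univ (m + 1))) :
    Function.Injective (cokernelRowContract M) := by
  refine (injective_iff_map_eq_zero _).mpr fun x hx => ?_
  refine h.eq_zero_of_det_pow_smul_eq_zero hI hIM (e := m) fun C => ?_
  obtain ⟨x, rfl⟩ := Submodule.Quotient.mk_surjective _ x
  rw [← Submodule.Quotient.mk_smul, Submodule.Quotient.mk_eq_zero]
  exact det_pow_smul_mem_contractionImage M C x.2 hx

/-- The hypotheses bound the codimension of the locus of the maximal minors below by the generic
value `|κ| - m + 1`; the conclusion is the exactness at the second spot of the Buchsbaum–Rim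
complex. -/
theorem ker_mulVecLin_eq_span_matrixCircuit [LinearOrder κ] (hI : I.FG)
    (hR : DepthGE I (q + 1) R) (hIM : I ≤ (minorsIdeal m M).radical)
    (hcard : Fintype.card κ ≤ m + q) :
    LinearMap.ker M.mulVecLin =
      Submodule.span R {v | ∃ T : Finset κ, ∃ hT : T.card = m + 1, v = matrixCircuit M T hT} := by
  rw [← map_rowContract_exteriorPower]
  refine le_antisymm (fun w hw => ?_) (map_rowContract_exteriorPower_le_ker M)
  have hdepth {t : ℕ} (ht : t ≤ 2) :
      DepthGE I t (ContractionCokernel (rowForm M) Set.univ (m + 1)) :=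
    .contractionCokernel hI hR hIM (by omega) (by omega)
  have hquot : DepthGE I 1 ((κ → R) ⧸ LinearMap.range (cokernelRowContract M)) :=
    .of_exact (injective_cokernelRowContract hI hIM (hdepth one_le_two))
      (LinearMap.exact_map_mkQ_range _) (Submodule.mkQ_surjective _) (hdepth le_rfl)
      (hR.of_free.mono (by omega))
  rw [← range_cokernelRowContract, ← Submodule.Quotient.mk_eq_zero]
  refine hquot.eq_zero_of_det_pow_smul_eq_zero hI hIM (e := 1) fun C => ?_
  rw [pow_one, ← Submodule.Quotient.mk_smul, Submodule.Quotient.mk_eq_zero,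
    range_cokernelRowContract, ← rowContract_ιMulti_snoc M C hw]
  exact Submodule.mem_map_of_mem (ιMulti_range R (m + 1) ⟨_, rfl⟩)

end Resolution

section LogarithmicDerivations

variable {K : Type*} [CommRing K]

/-- The logarithmic derivations of a family of polynomials: the derivations `∑ j, θ j ∂/∂x_j`
mapping each `f i` into the ideal it generates, encoded by their coefficient vectors. -/
def logDerivations {ι σ : Type*} [Fintype σ] (f : ι → MvPolynomial σ K) :
    Submodule (MvPolynomial σ K) (σ → MvPolynomial σ K) where
  carrier := {θ | ∀ i, f i ∣ ∑ j, θ j * pderiv j (f i)}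
  zero_mem' i := by simp
  add_mem' hθ hη i := by
    simpa only [Pi.add_apply, add_mul, Finset.sum_add_distrib] using dvd_add (hθ i) (hη i)
  smul_mem' a θ hθ i := by
    simpa only [Pi.smul_apply, smul_eq_mul, mul_assoc, ← Finset.mul_sum] using
      dvd_mul_of_dvd_right (hθ i) a

/-- The matrix `Q_{∖1}` over an arbitrary ring of coefficients. -/
def reducedMatrix {n m : ℕ} (f : Fin m → MvPolynomial (Fin n) K) :
    Matrix (Fin m) (Col n m) (MvPolynomial (Fin n) K) :=
  Matrix.of fun i => Sum.elim (fun k => if i = (k : Fin m) then f i else 0)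
    (fun j => pderiv j (f i))

variable {n m : ℕ} {f : Fin m → MvPolynomial (Fin n) K} {d : Fin m → ℕ}

lemma reducedMatrix_mulVec (v : Col n m → MvPolynomial (Fin n) K) (i : Fin m) :
    (reducedMatrix f).mulVec v i =
      f i * (if h : (i : ℕ) ≠ 0 then v (Sum.inl ⟨i, h⟩) else 0) +
        ∑ j, v (Sum.inr j) * pderiv j (f i) := by
  simp only [Matrix.mulVec, dotProduct, reducedMatrix, Matrix.of_apply, Fintype.sum_sum_type,
    Sum.elim_inl, Sum.elim_inr]
  congr 1
  · split_ifs with h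
    · rw [Fintype.sum_eq_single ⟨i, h⟩ fun k hk => by
        rw [if_neg fun hik => hk (Subtype.ext hik.symm), zero_mul], if_pos rfl]
    · rw [mul_zero]
      refine Finset.sum_eq_zero fun k _ => ?_
      rw [if_neg (by rintro rfl; exact h k.2), zero_mul]
  · exact Finset.sum_congr rfl fun j _ => mul_comm _ _

lemma X_mem_logDerivations {ι σ : Type*} [Fintype σ] {f : ι → MvPolynomial σ K} {d : ι → ℕ}
    (hfh : ∀ i, (f i).IsHomogeneous (d i)) : X ∈ logDerivations f := fun i => by
  rw [(hfh i).sum_X_mul_pderiv, nsmul_eq_mul]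
  exact dvd_mul_left _ _

lemma map_ker_reducedMatrix_le_logDerivations :
    (LinearMap.ker (reducedMatrix f).mulVecLin).map (LinearMap.funLeft _ _ Sum.inr) ≤
      logDerivations f := by
  rintro _ ⟨v, hv, rfl⟩ i
  have hi := congrFun (LinearMap.mem_ker.mp hv) i
  rw [Matrix.mulVecLin_apply, reducedMatrix_mulVec, Pi.zero_apply] at hi
  exact (dvd_add_right (dvd_mul_right _ _)).mp (hi ▸ dvd_zero (f i))

/-- Writing `θ(f_i) = a_i f_i`, the Euler vector is subtracted `a_1 / d_1` times from `θ` so as to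
annihilate `f_1`, whose diagonal column is missing from the matrix. -/
lemma logDerivations_eq_span_X_sup_map_ker [NeZero m] (hfh : ∀ i, (f i).IsHomogeneous (d i))
    (hd : IsUnit (d 0 : K)) :
    logDerivations f = Submodule.span (MvPolynomial (Fin n) K) {X} ⊔
      (LinearMap.ker (reducedMatrix f).mulVecLin).map (LinearMap.funLeft _ _ Sum.inr) := by
  refine le_antisymm (fun θ hθ => ?_) (sup_le ?_ map_ker_reducedMatrix_le_logDerivations)
  · choose a ha using hθ
    obtain ⟨u, hu⟩ := hd.map (C : K →+* MvPolynomial (Fin n) K)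
    rw [map_natCast] at hu
    let b : MvPolynomial (Fin n) K := ↑u⁻¹ * a 0
    have hb : (d 0 : MvPolynomial (Fin n) K) * b = a 0 := by
      rw [← hu, Units.mul_inv_cancel_left]
    let η : Fin n → MvPolynomial (Fin n) K := θ - b • X
    have hη (i) : ∑ j, η j * pderiv j (f i) = f i * (a i - d i * b) := by
      simp only [η, Pi.sub_apply, Pi.smul_apply, smul_eq_mul, sub_mul, mul_assoc,
        Finset.sum_sub_distrib, ← Finset.mul_sum, (hfh i).sum_X_mul_pderiv, ha i, nsmul_eq_mul]
      ring
    refine Submodule.mem_sup.mpr ⟨b • X,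
      Submodule.smul_mem _ _ (Submodule.mem_span_singleton_self _), η,
      ⟨Sum.elim (fun k => d k * b - a k) η, ?_, rfl⟩, add_sub_cancel _ _⟩
    · funext i
      rw [Matrix.mulVecLin_apply, reducedMatrix_mulVec]
      simp only [Sum.elim_inl, Sum.elim_inr, hη, Pi.zero_apply]
      split_ifs with h
      · ring
      · obtain rfl : i = 0 := Fin.ext (by simpa using h)
        rw [hb]
        ring
  · exact (Submodule.span_singleton_le_iff_mem _ _).mpr (X_mem_logDerivations hfh)

end LogarithmicDerivations

section NormalCrossings

variable {K ι σ : Type*} [Field K]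

/-- The gradient of a polynomial at a point. -/
def gradientAt (p : σ → K) (g : MvPolynomial σ K) : σ → K := fun j => eval p (pderiv j g)

/-- The hypersurfaces `f i = 0` have normal crossings away from the origin, via the Jacobian
criterion: at each `p ≠ 0`, any at most `|σ|` of them passing through `p` have linearly independent
gradients. -/
def HasNormalCrossings [Fintype σ] (f : ι → MvPolynomial σ K) : Prop :=
  ∀ I : Finset ι, I.card ≤ Fintype.card σ → ∀ p : σ → K, p ≠ 0 → (∀ i ∈ I, eval p (f i) = 0) →
    LinearIndependent K fun i : I => gradientAt p (f i)

variable [Fintype σ] {f : ι → MvPolynomial σ K} {d : ι → ℕ} {p : σ → K} {I : Finset ι}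

lemma gradientAt_dotProduct_self {g : MvPolynomial σ K} {k : ℕ} (hg : g.IsHomogeneous k)
    (p : σ → K) : gradientAt p g ⬝ᵥ p = k * eval p g := by
  have h := congrArg (eval p) hg.sum_X_mul_pderiv
  simpa [gradientAt, dotProduct, mul_comm] using h

lemma HasNormalCrossings.card_lt (h : HasNormalCrossings f)
    (hfh : ∀ i, (f i).IsHomogeneous (d i)) (hp : p ≠ 0) (hI : ∀ i ∈ I, eval p (f i) = 0) :
    I.card < Fintype.card σ := by
  by_contra! hcard
  obtain ⟨J, hJI, hJ⟩ := Finset.exists_subset_card_eq hcard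
  have hspan := (h J hJ.le p hp fun i hi => hI i (hJI hi)).span_eq_top_of_card_eq_finrank'
    (by rw [Fintype.card_coe, hJ, Module.finrank_fintype_fun_eq_card])
  have hzero : Submodule.span K (Set.range fun i : J => gradientAt p (f i)) ≤
      LinearMap.ker (dotProductBilin K K p) := by
    rw [Submodule.span_le]
    rintro _ ⟨⟨i, hi⟩, rfl⟩
    change p ⬝ᵥ gradientAt p (f i) = 0
    rw [dotProduct_comm, gradientAt_dotProduct_self (hfh i), hI i (hJI hi), mul_zero]
  refine hp (dotProduct_eq_zero p fun w => hzero (hspan ▸ Submodule.mem_top))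

lemma HasNormalCrossings.linearIndependent (h : HasNormalCrossings f)
    (hfh : ∀ i, (f i).IsHomogeneous (d i)) (hp : p ≠ 0) (hI : ∀ i ∈ I, eval p (f i) = 0) :
    LinearIndependent K fun i : I => gradientAt p (f i) :=
  h I (h.card_lt hfh hp hI).le p hp hI

end NormalCrossings

section MaximalMinors

variable {K κ : Type*} [Field K] [Finite κ] {m n : ℕ}

lemma exists_det_submatrix_ne_zero {A : Matrix (Fin m) κ K} (hA : LinearIndependent K A.row) :
    ∃ C : Fin m → κ, (A.submatrix id C).det ≠ 0 := by
  cases nonempty_fintype κ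
  obtain ⟨τ, C, -, hspan, hli⟩ := exists_linearIndependent' K A.col
  have htop : Submodule.span K (Set.range (A.col ∘ C)) = ⊤ := by
    rw [hspan]
    refine Submodule.eq_top_of_finrank_eq ?_
    rw [← A.rank_eq_finrank_span_cols, hA.rank_matrix, Module.finrank_fintype_fun_eq_card]
  let e := (Pi.basisFun K (Fin m)).indexEquiv (Module.Basis.mk hli htop.ge)
  refine ⟨C ∘ e, fun hdet => ?_⟩
  have hcols : LinearIndependent K (A.submatrix id (C ∘ e)).col := hli.comp e e.injective
  rw [Matrix.linearIndependent_cols_iff_isUnit, Matrix.isUnit_iff_isUnit_det, hdet] at hcols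
  exact not_isUnit_zero hcols

variable {f : Fin m → MvPolynomial (Fin n) K} {d : Fin m → ℕ} {p : Fin n → K}

lemma vecMul_reducedMatrix_inl (y : Fin m → K) (k : {k : Fin m // (k : ℕ) ≠ 0}) :
    Matrix.vecMul y ((reducedMatrix f).map (eval p)) (Sum.inl k) = y k * eval p (f k) := by
  simp only [Matrix.vecMul, dotProduct, Matrix.map_apply, reducedMatrix, Matrix.of_apply,
    Sum.elim_inl]
  rw [Fintype.sum_eq_single (k : Fin m) fun i hi => by rw [if_neg hi, map_zero, mul_zero],
    if_pos rfl]

lemma vecMul_reducedMatrix_inr (y : Fin m → K) (j : Fin n) :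
    Matrix.vecMul y ((reducedMatrix f).map (eval p)) (Sum.inr j) =
      (∑ i, y i • gradientAt p (f i)) j := by
  simp [Matrix.vecMul, dotProduct, reducedMatrix, gradientAt]

/-- The diagonal columns give this for `k ≠ 0`, and Euler's identity then gives it for `k = 0`. -/
lemma mul_eval_eq_zero_of_vecMul_reducedMatrix [NeZero m] (hfh : ∀ i, (f i).IsHomogeneous (d i))
    (hd : (d 0 : K) ≠ 0) {y : Fin m → K}
    (hy : Matrix.vecMul y ((reducedMatrix f).map (eval p)) = 0) (k : Fin m) :
    y k * eval p (f k) = 0 := by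
  have hdiag (k : Fin m) (hk : k ≠ 0) : y k * eval p (f k) = 0 := by
    rw [← vecMul_reducedMatrix_inl y ⟨k, Fin.val_ne_zero_iff.mpr hk⟩, hy, Pi.zero_apply]
  have hgrad : ∑ i, y i • gradientAt p (f i) = 0 :=
    funext fun j => by rw [← vecMul_reducedMatrix_inr, hy]; rfl
  have heuler : ∑ i, y i * (d i * eval p (f i)) = 0 := by
    have h := congrArg (· ⬝ᵥ p) hgrad
    simpa only [sum_dotProduct, smul_dotProduct, smul_eq_mul, zero_dotProduct,
      gradientAt_dotProduct_self (hfh _)] using h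
  rcases eq_or_ne k 0 with rfl | hk
  · rw [Fintype.sum_eq_single 0 fun i hi => by rw [mul_left_comm, hdiag i hi, mul_zero],
      mul_left_comm] at heuler
    exact (mul_eq_zero.mp heuler).resolve_left hd
  · exact hdiag k hk

lemma linearIndependent_row_reducedMatrix_map_eval [NeZero m]
    (hfh : ∀ i, (f i).IsHomogeneous (d i)) (hd : (d 0 : K) ≠ 0) (h : HasNormalCrossings f)
    (hp : p ≠ 0) : LinearIndependent K ((reducedMatrix f).map (eval p)).row := by
  classical
  rw [← Matrix.vecMul_injective_iff, ← Matrix.coe_vecMulLinear, ← LinearMap.ker_eq_bot,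
    LinearMap.ker_eq_bot']
  intro y hy
  replace hy : Matrix.vecMul y ((reducedMatrix f).map (eval p)) = 0 := hy
  let I : Finset (Fin m) := {i | eval p (f i) = 0}
  have hI : ∀ i ∈ I, eval p (f i) = 0 := fun i hi => (Finset.mem_filter_univ i).mp hi
  have hoff : ∀ i ∉ I, y i = 0 := fun i hi =>
    (mul_eq_zero.mp (mul_eval_eq_zero_of_vecMul_reducedMatrix hfh hd hy i)).resolve_right
      fun hi0 => hi ((Finset.mem_filter_univ i).mpr hi0)
  have hsum : ∑ i : I, y i • gradientAt p (f i) = 0 := by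
    rw [Finset.sum_coe_sort I fun i => y i • gradientAt p (f i),
      Finset.sum_subset (Finset.subset_univ I) fun i _ hi => by rw [hoff i hi, zero_smul]]
    exact funext fun j => by rw [← vecMul_reducedMatrix_inr, hy]; rfl
  funext i
  by_cases hi : i ∈ I
  · exact Fintype.linearIndependent_iff.mp (h.linearIndependent hfh hp hI) (fun i => y i) hsum
      ⟨i, hi⟩
  · exact hoff i hi

lemma idealOfVars_le_radical_minorsIdeal [IsAlgClosed K] [NeZero m]
    (hfh : ∀ i, (f i).IsHomogeneous (d i)) (hd : (d 0 : K) ≠ 0) (h : HasNormalCrossings f) :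
    idealOfVars (Fin n) K ≤ (minorsIdeal m (reducedMatrix f)).radical := by
  rw [idealOfVars, Ideal.span_le]
  rintro _ ⟨j, rfl⟩
  rw [SetLike.mem_coe, ← vanishingIdeal_zeroLocus_eq_radical (K := K), mem_vanishingIdeal_iff]
  intro p hp
  rw [aeval_X]
  by_contra hpj
  obtain ⟨C, hC⟩ := exists_det_submatrix_ne_zero
    (linearIndependent_row_reducedMatrix_map_eval hfh hd h (p := p) fun hp0 => hpj (congrFun hp0 j))
  have hinj : Function.Injective C := fun a b hab => by
    by_contra hne
    exact hC (Matrix.det_zero_of_column_eq hne fun i => by simp [hab])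
  have hzero := mem_zeroLocus_iff.mp hp _
    (Ideal.subset_span ⟨id, C, Function.injective_id, hinj, rfl⟩)
  rw [AlgHom.map_det] at hzero
  exact hC hzero

end MaximalMinors

theorem der_generated_by_euler_and_circuits_general {K : Type u} [Field K] [IsAlgClosed K]
    {n m : ℕ} [NeZero m] {f : Fin m → MvPolynomial (Fin n) K} {d : Fin m → ℕ}
    (hfh : ∀ i, (f i).IsHomogeneous (d i)) (hd : (d 0 : K) ≠ 0) (h : HasNormalCrossings f) :
    logDerivations f = Submodule.span (MvPolynomial (Fin n) K)
      (insert X {v | ∃ T : Finset (Col n m), ∃ hT : T.card = m + 1,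
        v = fun j => matrixCircuit (reducedMatrix f) T hT (Sum.inr j)}) := by
  rcases n with - | q
  · exact Subsingleton.elim _ _
  have hcard : Fintype.card (Col (q + 1) m) ≤ m + q := by
    have hlt : Fintype.card {k : Fin m // (k : ℕ) ≠ 0} < Fintype.card (Fin m) :=
      Fintype.card_subtype_lt (x := 0) (by simp)
    rw [Fintype.card_fin] at hlt
    rw [Fintype.card_sum, Fintype.card_fin]
    omega
  rw [logDerivations_eq_span_X_sup_map_ker hfh hd.isUnit,
    ker_mulVecLin_eq_span_matrixCircuit (idealOfVars_fg _ _) depthGE_idealOfVars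
      (idealOfVars_le_radical_minorsIdeal hfh hd h) hcard,
    Submodule.map_span, Submodule.span_insert]
  congr 2
  ext v
  constructor
  · rintro ⟨_, ⟨T, hT, rfl⟩, rfl⟩
    exact ⟨T, hT, rfl⟩
  · rintro ⟨T, hT, rfl⟩
    exact ⟨_, ⟨T, hT, rfl⟩, rfl⟩

lemma SNC.hasNormalCrossings {n m : ℕ} {f : Fin m → Rp n} (h : SNC n m f) :
    HasNormalCrossings f := by
  intro I hcard p hp hI
  rcases I.eq_empty_or_nonempty with rfl | hne
  · exact linearIndependent_empty_type
  · rw [linearIndependent_iff_card_eq_finrank_span, Fintype.card_coe,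
      ← h.2 I hne.card_pos (by simpa using hcard) p hp hI, Matrix.rank_eq_finrank_span_row]
    rfl

lemma circuit_eq_matrixCircuit (n m : ℕ) (f : Fin m → Rp n) (T : Finset (Col n m))
    (hT : T.card = m + 1) : circuit n m f T hT = matrixCircuit (reducedMatrix f) T hT := by
  funext c
  unfold circuit matrixCircuit
  congr!

/-- If moreover all `d_i ≥ 2`, the module `Der(A)` of tangent derivations is
generated by the Euler vector `(x_1,…,x_n)` and the projections `π(c_T)` of the circuit
vectors onto the last `n` coordinates. -/
theorem der_generated_by_euler_and_circuits (n m : ℕ) (hn : 2 ≤ n) (hm : n + 1 ≤ m)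
    (f : Fin m → Rp n) (d : Fin m → ℕ)
    (hf0 : ∀ i, f i ≠ 0) (hfh : ∀ i, (f i).IsHomogeneous (d i)) (hd2 : ∀ i, 2 ≤ d i)
    (hsnc : SNC n m f) :
    ∀ θ : Fin n → Rp n,
      (∀ i, f i ∣ ∑ j, θ j * pderiv j (f i)) ↔
        θ ∈ Submodule.span (Rp n)
          (insert (fun j : Fin n => (X j : Rp n))
            {v | ∃ T : Finset (Col n m), ∃ hT : T.card = m + 1,
              v = fun j : Fin n => circuit n m f T hT (Sum.inr j)}) := by
  have : NeZero m := ⟨by omega⟩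
  have hd : (d 0 : ℂ) ≠ 0 := Nat.cast_ne_zero.mpr (by have := hd2 0; omega)
  simp only [circuit_eq_matrixCircuit]
  exact SetLike.ext_iff.mp
    (der_generated_by_euler_and_circuits_general hfh hd hsnc.hasNormalCrossings)
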